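/- Let L > 0, let w : [0,L] × ℝ → ℝ be of class C³, set v(r,t) = r·w(r,t), and suppose that for all r ∈ (0,L) and all t, v satisfies ∂²v/∂t² − ∂²v/∂r² + μv + r·V′(v/r) − J·r = β·∂³v/(∂t∂r²) − γ·∂v/∂t, with the boundary conditions w(L,t) = 0 and ∂w/∂r(L,t) = 0 for all t (corresponding to Dirichlet data u(L,t) = 0 and Neumann data ∇u·n̂ = 0 at radius L). Define E(t) = (π/2)·∫₀ᴸ [½(∂v/∂t)² + ½(∂v/∂r)² + r²·G(v/r)] dr. Then for every t, E is differentiable and E′(t) = −(π/2)·∫₀ᴸ [β·(∂²v/(∂t∂r) − (1/r)·∂v/∂t)² + γ·(∂v/∂t)²] dr; here ∂²v/(∂t∂r) − (1/r)·∂v/∂t = r·∂²w/(∂t∂r), so the integrand is β·r²·(∂²w/(∂t∂r))² + γ·r²·(∂w/∂t)². -/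

import Mathlib

open MeasureTheory

open Set Filter Topology ContDiff

/-!
Multiplying the equation by `v_t` gives the local balance law
`∂ₜ (½ v_t² + ½ v_r² + r² G(w)) = ∂ᵣ (v_t (v_r + β v_tr)) - β v_tr² - γ v_t²`, which is integrated
over `[0, L]`. The claimed dissipation has `r w_tr` in place of `v_tr = w_t + r w_tr`; the squares
differ by an exact derivative, `v_tr² = (r w_tr)² + ∂ᵣ (r w_t²)`, so that the exchange only changes
the boundary flux to `v_t (v_r + β r w_tr)`. The factor `v_t = r w_t` vanishes at `r = 0`, and at
`r = L` by the Dirichlet condition.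
-/

section DirDerivWithin

variable {E F : Type*} [NormedAddCommGroup E] [NormedSpace ℝ E] [NormedAddCommGroup F]
  [NormedSpace ℝ F] {s : Set E} {f : E → F}

/-- The derivative of `f` in the direction `e`, taken within `s`. Unlike an iterated `deriv`, it
makes sense up to the boundary of `s`, where it is one-sided. -/
noncomputable def dirDerivWithin (s : Set E) (e : E) (f : E → F) (x : E) : F :=
  fderivWithin ℝ f s x e

theorem contDiffOn_dirDerivWithin {m n : ℕ∞ω} (hf : ContDiffOn ℝ n f s)
    (hs : UniqueDiffOn ℝ s) (hmn : m + 1 ≤ n) (e : E) :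
    ContDiffOn ℝ m (dirDerivWithin s e f) s :=
  (hf.fderivWithin hs hmn).clm_apply contDiffOn_const

theorem continuousOn_dirDerivWithin (hf : ContDiffOn ℝ 1 f s) (hs : UniqueDiffOn ℝ s) (e : E) :
    ContinuousOn (dirDerivWithin s e f) s :=
  (contDiffOn_dirDerivWithin (m := 0) hf hs (by norm_num) e).continuousOn

theorem continuousOn_dirDerivWithin_dirDerivWithin (hf : ContDiffOn ℝ 2 f s)
    (hs : UniqueDiffOn ℝ s) (d e : E) :
    ContinuousOn (dirDerivWithin s d (dirDerivWithin s e f)) s :=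
  continuousOn_dirDerivWithin (contDiffOn_dirDerivWithin hf hs le_rfl e) hs d

theorem dirDerivWithin_comm (hf : ContDiffOn ℝ 2 f s) (hs : UniqueDiffOn ℝ s) {x : E} (hx : x ∈ s)
    (hx' : x ∈ closure (interior s)) (d e : E) :
    dirDerivWithin s d (dirDerivWithin s e f) x = dirDerivWithin s e (dirDerivWithin s d f) x := by
  have hdiff : DifferentiableWithinAt ℝ (fderivWithin ℝ f s) s x :=
    (hf.fderivWithin hs (m := 1) le_rfl).differentiableOn one_ne_zero x hx
  have iterated (d e : E) : dirDerivWithin s d (dirDerivWithin s e f) x =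
      fderivWithin ℝ (fderivWithin ℝ f s) s x d e := by
    unfold dirDerivWithin
    rw [fderivWithin_clm_apply (hs x hx) hdiff (differentiableWithinAt_const e)]
    simp
  rw [iterated, iterated, (hf x hx).isSymmSndFDerivWithinAt (by simp) hs hx' hx]

end DirDerivWithin

/-- The partial derivative in the second variable of a function on the strip `I × ℝ` of points
`(r, t)`. -/
noncomputable abbrev timeDeriv {F : Type*} [NormedAddCommGroup F] [NormedSpace ℝ F] (I : Set ℝ)
    (f : ℝ × ℝ → F) : ℝ × ℝ → F :=
  dirDerivWithin (I ×ˢ univ) (0, 1) f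

/-- The partial derivative in the first variable of a function on the strip `I × ℝ` of points
`(r, t)`, one-sided at the endpoints of `I`. -/
noncomputable abbrev radialDeriv {F : Type*} [NormedAddCommGroup F] [NormedSpace ℝ F] (I : Set ℝ)
    (f : ℝ × ℝ → F) : ℝ × ℝ → F :=
  dirDerivWithin (I ×ˢ univ) (1, 0) f

section Strip

variable {F : Type*} [NormedAddCommGroup F] [NormedSpace ℝ F] {I : Set ℝ} {f : ℝ × ℝ → F} {r : ℝ}

local notation "∂ₜ" => timeDeriv I
local notation "∂ᵣ" => radialDeriv I

theorem hasDerivAt_time (hf : DifferentiableOn ℝ f (I ×ˢ univ)) (hr : r ∈ I) (t : ℝ) :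
    HasDerivAt (fun s => f (r, s)) (∂ₜ f (r, t)) t := by
  have hline : HasDerivWithinAt (fun s : ℝ => (r, s)) (0, 1) univ t :=
    ((hasDerivAt_const t r).prodMk (hasDerivAt_id t)).hasDerivWithinAt
  rw [← hasDerivWithinAt_univ]
  exact (hf (r, t) ⟨hr, mem_univ t⟩).hasFDerivWithinAt.comp_hasDerivWithinAt t hline
    fun s _ => ⟨hr, mem_univ s⟩

theorem hasDerivWithinAt_radial (hf : DifferentiableOn ℝ f (I ×ˢ univ)) (hr : r ∈ I) (t : ℝ) :
    HasDerivWithinAt (fun σ => f (σ, t)) (∂ᵣ f (r, t)) I r := by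
  have hline : HasDerivWithinAt (fun σ : ℝ => (σ, t)) (1, 0) I r :=
    (hasDerivWithinAt_id r I).prodMk (hasDerivWithinAt_const r I t)
  exact (hf (r, t) ⟨hr, mem_univ t⟩).hasFDerivWithinAt.comp_hasDerivWithinAt r hline
    fun _ hσ => mk_mem_prod hσ (mem_univ t)

theorem hasDerivAt_radial (hf : DifferentiableOn ℝ f (I ×ˢ univ)) (hr : r ∈ interior I) (t : ℝ) :
    HasDerivAt (fun σ => f (σ, t)) (∂ᵣ f (r, t)) r :=
  (hasDerivWithinAt_radial hf (interior_subset hr) t).hasDerivAt (mem_interior_iff_mem_nhds.1 hr)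

theorem deriv_deriv_time (hI : UniqueDiffOn ℝ I) (hf : ContDiffOn ℝ 2 f (I ×ˢ univ)) (hr : r ∈ I)
    (t : ℝ) :
    deriv (fun s => deriv (fun τ => f (r, τ)) s) t = ∂ₜ (∂ₜ f) (r, t) := by
  have hft : ContDiffOn ℝ 1 (∂ₜ f) (I ×ˢ univ) :=
    contDiffOn_dirDerivWithin hf (hI.prod uniqueDiffOn_univ) le_rfl _
  simp only [(hasDerivAt_time (hf.differentiableOn two_ne_zero) hr _).deriv]
  exact (hasDerivAt_time (hft.differentiableOn one_ne_zero) hr t).deriv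

theorem deriv_time_deriv_radial (hI : UniqueDiffOn ℝ I) (hf : ContDiffOn ℝ 2 f (I ×ˢ univ))
    (hr : r ∈ interior I) (t : ℝ) :
    deriv (fun s => deriv (fun σ => f (σ, s)) r) t = ∂ₜ (∂ᵣ f) (r, t) := by
  have hfr : ContDiffOn ℝ 1 (∂ᵣ f) (I ×ˢ univ) :=
    contDiffOn_dirDerivWithin hf (hI.prod uniqueDiffOn_univ) le_rfl _
  simp only [(hasDerivAt_radial (hf.differentiableOn two_ne_zero) hr _).deriv]
  exact (hasDerivAt_time (hfr.differentiableOn one_ne_zero) (interior_subset hr) t).deriv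

theorem deriv_time_derivWithin_radial (hI : UniqueDiffOn ℝ I) (hf : ContDiffOn ℝ 2 f (I ×ˢ univ))
    (hr : r ∈ I) (t : ℝ) :
    deriv (fun s => derivWithin (fun σ => f (σ, s)) I r) t = ∂ₜ (∂ᵣ f) (r, t) := by
  have hfr : ContDiffOn ℝ 1 (∂ᵣ f) (I ×ˢ univ) :=
    contDiffOn_dirDerivWithin hf (hI.prod uniqueDiffOn_univ) le_rfl _
  simp only [(hasDerivWithinAt_radial (hf.differentiableOn two_ne_zero) hr _).derivWithin (hI r hr)]
  exact (hasDerivAt_time (hfr.differentiableOn one_ne_zero) hr t).deriv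

theorem deriv_deriv_radial (hI : UniqueDiffOn ℝ I) (hf : ContDiffOn ℝ 2 f (I ×ˢ univ))
    (hr : r ∈ interior I) (t : ℝ) :
    deriv (fun σ => deriv (fun ρ => f (ρ, t)) σ) r = ∂ᵣ (∂ᵣ f) (r, t) := by
  have hfr : ContDiffOn ℝ 1 (∂ᵣ f) (I ×ˢ univ) :=
    contDiffOn_dirDerivWithin hf (hI.prod uniqueDiffOn_univ) le_rfl _
  have hnear : (fun σ => deriv (fun ρ => f (ρ, t)) σ) =ᶠ[𝓝 r] fun σ => ∂ᵣ f (σ, t) := by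
    filter_upwards [isOpen_interior.mem_nhds hr] with σ hσ using
      (hasDerivAt_radial (hf.differentiableOn two_ne_zero) hσ t).deriv
  rw [hnear.deriv_eq]
  exact (hasDerivAt_radial (hfr.differentiableOn one_ne_zero) hr t).deriv

theorem deriv_time_deriv_deriv_radial (hI : UniqueDiffOn ℝ I) (hf : ContDiffOn ℝ 3 f (I ×ˢ univ))
    (hr : r ∈ interior I) (t : ℝ) :
    deriv (fun s => deriv (fun σ => deriv (fun ρ => f (ρ, s)) σ) r) t =
      ∂ₜ (∂ᵣ (∂ᵣ f)) (r, t) := by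
  have hs := hI.prod (uniqueDiffOn_univ (𝕜 := ℝ) (E := ℝ))
  have hfr : ContDiffOn ℝ 2 (∂ᵣ f) (I ×ˢ univ) :=
    contDiffOn_dirDerivWithin hf hs (by norm_num) _
  have hfrr : ContDiffOn ℝ 1 (∂ᵣ (∂ᵣ f)) (I ×ˢ univ) :=
    contDiffOn_dirDerivWithin hfr hs le_rfl _
  simp only [deriv_deriv_radial hI (hf.of_le (by norm_num)) hr]
  exact (hasDerivAt_time (hfrr.differentiableOn one_ne_zero) (interior_subset hr) t).deriv

theorem continuousOn_radial_slice {X : Type*} [TopologicalSpace X] {g : ℝ × ℝ → X}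
    (hg : ContinuousOn g (I ×ˢ univ)) (t : ℝ) : ContinuousOn (fun r => g (r, t)) I :=
  hg.comp (by fun_prop) fun _ hr => ⟨hr, mem_univ t⟩

end Strip

section EnergyBalance

variable {a b : ℝ}

local notation "∂ₜ" => timeDeriv (Icc a b)
local notation "∂ᵣ" => radialDeriv (Icc a b)

theorem uniqueDiffOn_Icc_prod_univ (hab : a < b) :
    UniqueDiffOn ℝ (Icc a b ×ˢ (univ : Set ℝ)) :=
  (uniqueDiffOn_Icc hab).prod uniqueDiffOn_univ

theorem radialDeriv_timeDeriv_comm {F : Type*} [NormedAddCommGroup F] [NormedSpace ℝ F]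
    {f : ℝ × ℝ → F} (hab : a < b) (hf : ContDiffOn ℝ 2 f (Icc a b ×ˢ univ)) {r : ℝ}
    (hr : r ∈ Icc a b) (t : ℝ) :
    ∂ᵣ (∂ₜ f) (r, t) = ∂ₜ (∂ᵣ f) (r, t) := by
  have hclosure : (r, t) ∈ closure (interior (Icc a b ×ˢ (univ : Set ℝ))) := by
    simpa [interior_prod_eq, closure_prod_eq, closure_Ioo hab.ne] using hr
  exact dirDerivWithin_comm hf (uniqueDiffOn_Icc_prod_univ hab) ⟨hr, mem_univ t⟩ hclosure _ _

theorem hasDerivAt_radial_timeDeriv {F : Type*} [NormedAddCommGroup F] [NormedSpace ℝ F]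
    {f : ℝ × ℝ → F} (hab : a < b) (hf : ContDiffOn ℝ 2 f (Icc a b ×ˢ univ)) {r : ℝ}
    (hr : r ∈ Ioo a b) (t : ℝ) :
    HasDerivAt (fun σ => ∂ₜ f (σ, t)) (∂ₜ (∂ᵣ f) (r, t)) r := by
  have hft : ContDiffOn ℝ 1 (∂ₜ f) (Icc a b ×ˢ univ) :=
    contDiffOn_dirDerivWithin hf (uniqueDiffOn_Icc_prod_univ hab) le_rfl _
  rw [← radialDeriv_timeDeriv_comm hab hf (Ioo_subset_Icc_self hr)]
  exact hasDerivAt_radial (hft.differentiableOn one_ne_zero) (by rwa [interior_Icc]) t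

theorem hasDerivAt_integral_of_continuousOn {E : Type*} [NormedAddCommGroup E] [NormedSpace ℝ E]
    (hab : a ≤ b) {f f' : ℝ × ℝ → E} (hf : ContinuousOn f (Icc a b ×ˢ univ))
    (hf' : ContinuousOn f' (Icc a b ×ˢ univ))
    (hderiv : ∀ r ∈ Icc a b, ∀ t, HasDerivAt (fun s => f (r, s)) (f' (r, t)) t) (t : ℝ) :
    HasDerivAt (fun s => ∫ r in a..b, f (r, s)) (∫ r in a..b, f' (r, t)) t := by
  obtain ⟨C, hC⟩ := (isCompact_Icc.prod isCompact_Icc).exists_bound_of_continuousOn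
    (hf'.mono (prod_mono_right (subset_univ (Icc (t - 1) (t + 1)))))
  have hint {g : ℝ × ℝ → E} (hg : ContinuousOn g (Icc a b ×ˢ univ)) (s : ℝ) :
      IntervalIntegrable (fun r => g (r, s)) volume a b :=
    (continuousOn_radial_slice hg s).intervalIntegrable_of_Icc hab
  have hsub : uIoc a b ⊆ Icc a b := uIoc_of_le hab ▸ Ioc_subset_Icc_self
  exact (intervalIntegral.hasDerivAt_integral_of_dominated_loc_of_deriv_le
    (F := fun s r => f (r, s)) (F' := fun s r => f' (r, s)) (bound := fun _ => C)
    (Icc_mem_nhds (sub_one_lt t) (lt_add_one t))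
    (.of_forall fun s => (hint hf s).def'.aestronglyMeasurable) (hint hf t)
    (hint hf' t).def'.aestronglyMeasurable
    (.of_forall fun r hr s hs => hC (r, s) ⟨hsub hr, hs⟩) intervalIntegrable_const
    (.of_forall fun r hr s _ => hderiv r (hsub hr) s)).2

/-- The energy flux `v_t (v_r + β v_tr)` of a field `v` on `I × ℝ` with internal damping `β`. -/
noncomputable def energyFlux (I : Set ℝ) (β : ℝ) (v : ℝ × ℝ → ℝ) (q : ℝ × ℝ) : ℝ :=
  timeDeriv I v q * (radialDeriv I v q + β * timeDeriv I (radialDeriv I v) q)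

theorem hasDerivAt_energyFlux (hab : a < b) {v : ℝ × ℝ → ℝ}
    (hv : ContDiffOn ℝ 3 v (Icc a b ×ˢ univ)) {r : ℝ} (hr : r ∈ Ioo a b) (β t : ℝ) :
    HasDerivAt (fun σ => energyFlux (Icc a b) β v (σ, t))
      (∂ₜ (∂ᵣ v) (r, t) * (∂ᵣ v (r, t) + β * ∂ₜ (∂ᵣ v) (r, t)) +
        ∂ₜ v (r, t) * (∂ᵣ (∂ᵣ v) (r, t) + β * ∂ₜ (∂ᵣ (∂ᵣ v)) (r, t))) r := by
  have hvr : ContDiffOn ℝ 2 (∂ᵣ v) (Icc a b ×ˢ univ) :=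
    contDiffOn_dirDerivWithin hv (uniqueDiffOn_Icc_prod_univ hab) (by norm_num) _
  have hderiv_vr : HasDerivAt (fun σ => ∂ᵣ v (σ, t)) (∂ᵣ (∂ᵣ v) (r, t)) r :=
    hasDerivAt_radial (hvr.differentiableOn two_ne_zero) (by rwa [interior_Icc]) t
  exact (hasDerivAt_radial_timeDeriv hab (hv.of_le (by norm_num)) hr t).fun_mul
    (hderiv_vr.fun_add ((hasDerivAt_radial_timeDeriv hab hvr hr t).const_mul β))

-- The potential energy density `p` and the force `f` depend on `(r, t)` rather than on `(r, v)`,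
-- because `r ^ 2 * G (v / r)` degenerates at `r = 0`.
theorem hasDerivAt_integral_energy (hab : a < b) {v p f : ℝ × ℝ → ℝ}
    (hv : ContDiffOn ℝ 2 v (Icc a b ×ˢ univ)) (hp : ContinuousOn p (Icc a b ×ˢ univ))
    (hf : ContinuousOn f (Icc a b ×ˢ univ))
    (hpf : ∀ r ∈ Icc a b, ∀ t, HasDerivAt (fun s => p (r, s)) (f (r, t) * ∂ₜ v (r, t)) t) (t : ℝ) :
    HasDerivAt
      (fun s => ∫ r in a..b, (1 / 2 * ∂ₜ v (r, s) ^ 2 + 1 / 2 * ∂ᵣ v (r, s) ^ 2 + p (r, s)))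
      (∫ r in a..b, (∂ₜ v (r, t) * ∂ₜ (∂ₜ v) (r, t) + ∂ᵣ v (r, t) * ∂ₜ (∂ᵣ v) (r, t) +
        f (r, t) * ∂ₜ v (r, t))) t := by
  have hs := uniqueDiffOn_Icc_prod_univ hab
  have hvt : ContDiffOn ℝ 1 (∂ₜ v) (Icc a b ×ˢ univ) := contDiffOn_dirDerivWithin hv hs le_rfl _
  have hvr : ContDiffOn ℝ 1 (∂ᵣ v) (Icc a b ×ˢ univ) := contDiffOn_dirDerivWithin hv hs le_rfl _
  have := hvt.continuousOn
  have := hvr.continuousOn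
  have := continuousOn_dirDerivWithin hvt hs (0, 1)
  have := continuousOn_dirDerivWithin hvr hs (0, 1)
  refine hasDerivAt_integral_of_continuousOn hab.le
    (f := fun q => 1 / 2 * ∂ₜ v q ^ 2 + 1 / 2 * ∂ᵣ v q ^ 2 + p q)
    (f' := fun q => ∂ₜ v q * ∂ₜ (∂ₜ v) q + ∂ᵣ v q * ∂ₜ (∂ᵣ v) q + f q * ∂ₜ v q)
    (by fun_prop) (by fun_prop) (fun r hr t => ?_) t
  have hkinetic := ((hasDerivAt_time (hvt.differentiableOn one_ne_zero) hr t).fun_pow 2).const_mul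
    (1 / 2 : ℝ)
  have hgradient := ((hasDerivAt_time (hvr.differentiableOn one_ne_zero) hr t).fun_pow 2).const_mul
    (1 / 2 : ℝ)
  refine ((hkinetic.fun_add hgradient).fun_add (hpf r hr t)).congr_deriv ?_
  norm_num
  ring

theorem hasDerivAt_integral_energy_of_wave_equation (hab : a < b) {v p f : ℝ × ℝ → ℝ} {β γ t : ℝ}
    (hv : ContDiffOn ℝ 3 v (Icc a b ×ˢ univ)) (hp : ContinuousOn p (Icc a b ×ˢ univ))
    (hf : ContinuousOn f (Icc a b ×ˢ univ))
    (hpf : ∀ r ∈ Icc a b, ∀ t, HasDerivAt (fun s => p (r, s)) (f (r, t) * ∂ₜ v (r, t)) t)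
    (hwave : ∀ r ∈ Ioo a b, ∂ₜ (∂ₜ v) (r, t) - ∂ᵣ (∂ᵣ v) (r, t) + f (r, t) =
      β * ∂ₜ (∂ᵣ (∂ᵣ v)) (r, t) - γ * ∂ₜ v (r, t)) :
    HasDerivAt
      (fun s => ∫ r in a..b, (1 / 2 * ∂ₜ v (r, s) ^ 2 + 1 / 2 * ∂ᵣ v (r, s) ^ 2 + p (r, s)))
      (energyFlux (Icc a b) β v (b, t) - energyFlux (Icc a b) β v (a, t) -
        ∫ r in a..b, (β * ∂ₜ (∂ᵣ v) (r, t) ^ 2 + γ * ∂ₜ v (r, t) ^ 2)) t := by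
  have hs := uniqueDiffOn_Icc_prod_univ hab
  have hv₂ : ContDiffOn ℝ 2 v (Icc a b ×ˢ univ) := hv.of_le (by norm_num)
  have hvt := continuousOn_dirDerivWithin (hv.of_le (by norm_num)) hs (0, 1)
  have hvr := continuousOn_dirDerivWithin (hv.of_le (by norm_num)) hs (1, 0)
  have hvtt := continuousOn_dirDerivWithin_dirDerivWithin hv₂ hs (0, 1) (0, 1)
  have hvrt := continuousOn_dirDerivWithin_dirDerivWithin hv₂ hs (0, 1) (1, 0)
  have hflux : ContinuousOn (energyFlux (Icc a b) β v) (Icc a b ×ˢ univ) := by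
    unfold energyFlux
    fun_prop
  have hpower := continuousOn_radial_slice (t := t) (g := fun q => ∂ₜ v q * ∂ₜ (∂ₜ v) q +
    ∂ᵣ v q * ∂ₜ (∂ᵣ v) q + f q * ∂ₜ v q) (by fun_prop)
  have hloss := continuousOn_radial_slice (t := t)
    (g := fun q => β * ∂ₜ (∂ᵣ v) q ^ 2 + γ * ∂ₜ v q ^ 2) (by fun_prop)
  refine (hasDerivAt_integral_energy hab hv₂ hp hf hpf t).congr_deriv (eq_sub_of_add_eq ?_)
  rw [← intervalIntegral.integral_add (hpower.intervalIntegrable_of_Icc hab.le)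
    (hloss.intervalIntegrable_of_Icc hab.le)]
  refine intervalIntegral.integral_eq_sub_of_hasDerivAt_of_le hab.le
    (continuousOn_radial_slice hflux t) (fun r hr => ?_)
    ((hpower.add hloss).intervalIntegrable_of_Icc hab.le)
  exact (hasDerivAt_energyFlux hab hv hr β t).congr_deriv
    (by linear_combination -∂ₜ v (r, t) * hwave r hr)

theorem integral_deriv_id_mul_sq (hab : a ≤ b) {g g' : ℝ → ℝ} (hg : ContinuousOn g (Icc a b))
    (hg' : ContinuousOn g' (Icc a b)) (hderiv : ∀ r ∈ Ioo a b, HasDerivAt g (g' r) r) :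
    ∫ r in a..b, (g r + r * g' r) ^ 2 =
      b * g b ^ 2 - a * g a ^ 2 + ∫ r in a..b, (r * g' r) ^ 2 := by
  have hboundary : ∫ r in a..b, (g r ^ 2 + r * (2 * g r * g' r)) = b * g b ^ 2 - a * g a ^ 2 := by
    refine intervalIntegral.integral_eq_sub_of_hasDerivAt_of_le hab (f := fun r => r * g r ^ 2)
      (by fun_prop) (fun r hr => ?_) (ContinuousOn.intervalIntegrable_of_Icc hab (by fun_prop))
    simpa using (hasDerivAt_id' r).fun_mul ((hderiv r hr).fun_pow 2)
  rw [← hboundary, ← intervalIntegral.integral_add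
    (ContinuousOn.intervalIntegrable_of_Icc hab (by fun_prop))
    (ContinuousOn.intervalIntegrable_of_Icc hab (by fun_prop))]
  congr 1 with r
  ring

end EnergyBalance

section RadialReduction

/-- The reduced field `v(r, t) = r w(r, t)` of a radially symmetric field with profile `w`. -/
def radialReduction (w : ℝ × ℝ → ℝ) (q : ℝ × ℝ) : ℝ :=
  q.1 * w q

variable {I : Set ℝ} {w : ℝ × ℝ → ℝ}

local notation "∂ₜ" => timeDeriv I
local notation "∂ᵣ" => radialDeriv I

theorem contDiffOn_radialReduction {n : ℕ∞ω} {s : Set (ℝ × ℝ)} (hw : ContDiffOn ℝ n w s) :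
    ContDiffOn ℝ n (radialReduction w) s :=
  contDiff_fst.contDiffOn.mul hw

theorem timeDeriv_radialReduction (hw : ContDiffOn ℝ 1 w (I ×ˢ univ)) {r : ℝ} (hr : r ∈ I)
    (t : ℝ) : ∂ₜ (radialReduction w) (r, t) = r * ∂ₜ w (r, t) :=
  (hasDerivAt_time ((contDiffOn_radialReduction hw).differentiableOn one_ne_zero) hr t).unique
    ((hasDerivAt_time (hw.differentiableOn one_ne_zero) hr t).const_mul r)

theorem radialDeriv_radialReduction (hI : UniqueDiffOn ℝ I)
    (hw : ContDiffOn ℝ 1 w (I ×ˢ univ)) {r : ℝ} (hr : r ∈ I) (t : ℝ) :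
    ∂ᵣ (radialReduction w) (r, t) = w (r, t) + r * ∂ᵣ w (r, t) := by
  have hproduct := (hasDerivAt_id' r).hasDerivWithinAt.fun_mul
    (hasDerivWithinAt_radial (hw.differentiableOn one_ne_zero) hr t)
  rw [one_mul] at hproduct
  exact (hI r hr).eq_deriv _ (hasDerivWithinAt_radial
    ((contDiffOn_radialReduction hw).differentiableOn one_ne_zero) hr t) hproduct

theorem timeDeriv_radialDeriv_radialReduction (hI : UniqueDiffOn ℝ I)
    (hw : ContDiffOn ℝ 2 w (I ×ˢ univ)) {r : ℝ} (hr : r ∈ I) (t : ℝ) :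
    ∂ₜ (∂ᵣ (radialReduction w)) (r, t) = ∂ₜ w (r, t) + r * ∂ₜ (∂ᵣ w) (r, t) := by
  have hs := hI.prod (uniqueDiffOn_univ (𝕜 := ℝ) (E := ℝ))
  have hvr : ContDiffOn ℝ 1 (∂ᵣ (radialReduction w)) (I ×ˢ univ) :=
    contDiffOn_dirDerivWithin (contDiffOn_radialReduction hw) hs le_rfl _
  have hwr : ContDiffOn ℝ 1 (∂ᵣ w) (I ×ˢ univ) := contDiffOn_dirDerivWithin hw hs le_rfl _
  have hderiv := hasDerivAt_time (hvr.differentiableOn one_ne_zero) hr t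
  simp only [radialDeriv_radialReduction hI (hw.of_le one_le_two) hr] at hderiv
  exact hderiv.unique ((hasDerivAt_time (hw.differentiableOn two_ne_zero) hr t).fun_add
    ((hasDerivAt_time (hwr.differentiableOn one_ne_zero) hr t).const_mul r))

/-- The flux `v_t (v_r + β r w_tr)` of the radial energy, where `v = r w`. -/
noncomputable def radialEnergyFlux (I : Set ℝ) (β : ℝ) (w : ℝ × ℝ → ℝ) (q : ℝ × ℝ) : ℝ :=
  timeDeriv I (radialReduction w) q *
    (radialDeriv I (radialReduction w) q + β * (q.1 * timeDeriv I (radialDeriv I w) q))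

theorem energyFlux_radialReduction (hI : UniqueDiffOn ℝ I)
    (hw : ContDiffOn ℝ 2 w (I ×ˢ univ)) {r : ℝ} (hr : r ∈ I) (β t : ℝ) :
    energyFlux I β (radialReduction w) (r, t) =
      radialEnergyFlux I β w (r, t) + β * (r * ∂ₜ w (r, t) ^ 2) := by
  unfold energyFlux radialEnergyFlux
  rw [timeDeriv_radialDeriv_radialReduction hI hw hr,
    timeDeriv_radialReduction (hw.of_le one_le_two) hr]
  ring

end RadialReduction

section RadialEnergy

variable {a b : ℝ} {w : ℝ × ℝ → ℝ}

local notation "∂ₜ" => timeDeriv (Icc a b)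
local notation "∂ᵣ" => radialDeriv (Icc a b)

theorem integral_timeDeriv_radialDeriv_radialReduction_sq (hab : a < b)
    (hw : ContDiffOn ℝ 2 w (Icc a b ×ˢ univ)) (t : ℝ) :
    ∫ r in a..b, ∂ₜ (∂ᵣ (radialReduction w)) (r, t) ^ 2 =
      b * ∂ₜ w (b, t) ^ 2 - a * ∂ₜ w (a, t) ^ 2 + ∫ r in a..b, (r * ∂ₜ (∂ᵣ w) (r, t)) ^ 2 := by
  have hs := uniqueDiffOn_Icc_prod_univ hab
  have hw₁ : ContDiffOn ℝ 1 w (Icc a b ×ˢ univ) := hw.of_le one_le_two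
  rw [← integral_deriv_id_mul_sq hab.le
    (continuousOn_radial_slice (continuousOn_dirDerivWithin hw₁ hs (0, 1)) t)
    (continuousOn_radial_slice (continuousOn_dirDerivWithin_dirDerivWithin hw hs (0, 1) (1, 0)) t)
    fun r hr => hasDerivAt_radial_timeDeriv hab hw hr t]
  refine intervalIntegral.integral_congr_Ioo_of_le hab.le fun r hr => ?_
  simp only [timeDeriv_radialDeriv_radialReduction (uniqueDiffOn_Icc hab) hw
    (Ioo_subset_Icc_self hr)]

theorem integral_dissipation_radialReduction (hab : a < b)
    (hw : ContDiffOn ℝ 2 w (Icc a b ×ˢ univ)) (β γ t : ℝ) :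
    ∫ r in a..b, (β * ∂ₜ (∂ᵣ (radialReduction w)) (r, t) ^ 2 +
        γ * ∂ₜ (radialReduction w) (r, t) ^ 2) =
      β * (b * ∂ₜ w (b, t) ^ 2 - a * ∂ₜ w (a, t) ^ 2) +
        ∫ r in a..b, (β * (r * ∂ₜ (∂ᵣ w) (r, t)) ^ 2 + γ * ∂ₜ (radialReduction w) (r, t) ^ 2) := by
  have hs := uniqueDiffOn_Icc_prod_univ hab
  have hv := contDiffOn_radialReduction hw
  have hvt := continuousOn_dirDerivWithin (hv.of_le one_le_two) hs (0, 1)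
  have hvrt := continuousOn_dirDerivWithin_dirDerivWithin hv hs (0, 1) (1, 0)
  have hwrt := continuousOn_dirDerivWithin_dirDerivWithin hw hs (0, 1) (1, 0)
  have integrable {g : ℝ × ℝ → ℝ} (hg : ContinuousOn g (Icc a b ×ˢ univ)) :
      IntervalIntegrable (fun r => g (r, t)) volume a b :=
    (continuousOn_radial_slice hg t).intervalIntegrable_of_Icc hab.le
  have hγ := integrable (g := fun q => γ * ∂ₜ (radialReduction w) q ^ 2) (by fun_prop)
  rw [intervalIntegral.integral_add
      (integrable (g := fun q => β * ∂ₜ (∂ᵣ (radialReduction w)) q ^ 2) (by fun_prop)) hγ,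
    intervalIntegral.integral_add
      (integrable (g := fun q => β * (q.1 * ∂ₜ (∂ᵣ w) q) ^ 2) (by fun_prop)) hγ,
    intervalIntegral.integral_const_mul, intervalIntegral.integral_const_mul,
    intervalIntegral.integral_const_mul,
    integral_timeDeriv_radialDeriv_radialReduction_sq hab hw]
  ring

theorem hasDerivAt_radial_energy (hab : a < b) {β γ t : ℝ} {G : ℝ → ℝ} (hG : ContDiff ℝ 1 G)
    (hw : ContDiffOn ℝ 3 w (Icc a b ×ˢ univ))
    (hwave : ∀ r ∈ Ioo a b,
      ∂ₜ (∂ₜ (radialReduction w)) (r, t) - ∂ᵣ (∂ᵣ (radialReduction w)) (r, t) +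
          r * deriv G (w (r, t)) =
        β * ∂ₜ (∂ᵣ (∂ᵣ (radialReduction w))) (r, t) - γ * ∂ₜ (radialReduction w) (r, t)) :
    HasDerivAt
      (fun s => ∫ r in a..b, (1 / 2 * ∂ₜ (radialReduction w) (r, s) ^ 2 +
        1 / 2 * ∂ᵣ (radialReduction w) (r, s) ^ 2 + r ^ 2 * G (w (r, s))))
      (radialEnergyFlux (Icc a b) β w (b, t) - radialEnergyFlux (Icc a b) β w (a, t) -
        ∫ r in a..b, (β * (r * ∂ₜ (∂ᵣ w) (r, t)) ^ 2 + γ * ∂ₜ (radialReduction w) (r, t) ^ 2))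
      t := by
  have hw₁ : ContDiffOn ℝ 1 w (Icc a b ×ˢ univ) := hw.of_le (by norm_num)
  have hw₂ : ContDiffOn ℝ 2 w (Icc a b ×ˢ univ) := hw.of_le (by norm_num)
  have := hw.continuousOn
  have := hG.continuous
  have := hG.continuous_deriv le_rfl
  have hforce (r) (hr : r ∈ Icc a b) (t) : HasDerivAt (fun s => r ^ 2 * G (w (r, s)))
      (r * deriv G (w (r, t)) * ∂ₜ (radialReduction w) (r, t)) t := by
    have hchain := (hG.differentiable one_ne_zero _).hasDerivAt.comp t
      (hasDerivAt_time (hw₁.differentiableOn one_ne_zero) hr t)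
    refine (hchain.const_mul (r ^ 2)).congr_deriv ?_
    rw [timeDeriv_radialReduction hw₁ hr]
    ring
  refine (hasDerivAt_integral_energy_of_wave_equation hab (contDiffOn_radialReduction hw)
    (p := fun q => q.1 ^ 2 * G (w q)) (f := fun q => q.1 * deriv G (w q))
    (by fun_prop) (by fun_prop) hforce hwave).congr_deriv ?_
  rw [integral_dissipation_radialReduction hab hw₂,
    energyFlux_radialReduction (uniqueDiffOn_Icc hab) hw₂ (left_mem_Icc.2 hab.le),
    energyFlux_radialReduction (uniqueDiffOn_Icc hab) hw₂ (right_mem_Icc.2 hab.le)]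
  ring

end RadialEnergy

/-- The potential `G(u) = ½ μ u² + V(u) - J u` of the wave equation with squared mass `μ` and
current `J`, collecting all undifferentiated terms. -/
noncomputable def effectivePotential (μ J : ℝ) (V : ℝ → ℝ) (u : ℝ) : ℝ :=
  μ / 2 * u ^ 2 + V u - J * u

theorem contDiff_effectivePotential {n : ℕ∞ω} {V : ℝ → ℝ} (hV : ContDiff ℝ n V) (μ J : ℝ) :
    ContDiff ℝ n (effectivePotential μ J V) := by
  unfold effectivePotential
  fun_prop

theorem hasDerivAt_effectivePotential {V : ℝ → ℝ} (hV : Differentiable ℝ V) (μ J u : ℝ) :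
    HasDerivAt (effectivePotential μ J V) (μ * u + deriv V u - J) u := by
  refine ((((hasDerivAt_id' u).fun_pow 2).const_mul (μ / 2)).fun_add
    (hV u).hasDerivAt |>.fun_sub ((hasDerivAt_id' u).const_mul J)).congr_deriv ?_
  norm_num
  ring

section ClassicalDerivatives

variable {I : Set ℝ} {w : ℝ → ℝ → ℝ} {r : ℝ}

theorem deriv_time_mul_profile
    (hw : ContDiffOn ℝ 1 (fun q : ℝ × ℝ => w q.1 q.2) (I ×ˢ univ)) (hr : r ∈ I) (t : ℝ) :
    deriv (fun s => r * w r s) t = timeDeriv I (radialReduction fun q => w q.1 q.2) (r, t) :=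
  (hasDerivAt_time ((contDiffOn_radialReduction hw).differentiableOn one_ne_zero) hr t).deriv

theorem deriv_radial_mul_profile
    (hw : ContDiffOn ℝ 1 (fun q : ℝ × ℝ => w q.1 q.2) (I ×ˢ univ)) (hr : r ∈ interior I) (t : ℝ) :
    deriv (fun σ => σ * w σ t) r = radialDeriv I (radialReduction fun q => w q.1 q.2) (r, t) :=
  (hasDerivAt_radial ((contDiffOn_radialReduction hw).differentiableOn one_ne_zero) hr t).deriv

theorem radialReduction_wave_equation (hI : UniqueDiffOn ℝ I) {μ J β γ t : ℝ} {V : ℝ → ℝ}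
    (hV : Differentiable ℝ V)
    (hw : ContDiffOn ℝ 3 (fun q : ℝ × ℝ => w q.1 q.2) (I ×ˢ univ)) (hr : r ∈ interior I)
    (heq : deriv (fun s => deriv (fun τ => r * w r τ) s) t
        - deriv (fun σ => deriv (fun σ' => σ' * w σ' t) σ) r
        + μ * (r * w r t) + r * deriv V (w r t) - J * r
      = β * deriv (fun s => deriv (fun σ => deriv (fun σ' => σ' * w σ' s) σ) r) t
        - γ * deriv (fun s => r * w r s) t) :
    let v := radialReduction fun q => w q.1 q.2
    timeDeriv I (timeDeriv I v) (r, t) - radialDeriv I (radialDeriv I v) (r, t) +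
        r * deriv (effectivePotential μ J V) (w r t) =
      β * timeDeriv I (radialDeriv I (radialDeriv I v)) (r, t) - γ * timeDeriv I v (r, t) := by
  intro v
  have hrI := interior_subset hr
  have hv : ContDiffOn ℝ 3 v (I ×ˢ univ) := contDiffOn_radialReduction hw
  have hv₂ : ContDiffOn ℝ 2 v (I ×ˢ univ) := hv.of_le (by norm_num)
  have hvtt : deriv (fun s => deriv (fun τ => r * w r τ) s) t = _ :=
    deriv_deriv_time hI hv₂ hrI t
  have hvrr : deriv (fun σ => deriv (fun σ' => σ' * w σ' t) σ) r = _ :=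
    deriv_deriv_radial hI hv₂ hr t
  have hvrrt : deriv (fun s => deriv (fun σ => deriv (fun σ' => σ' * w σ' s) σ) r) t = _ :=
    deriv_time_deriv_deriv_radial hI hv hr t
  rw [hvtt, hvrr, hvrrt, deriv_time_mul_profile (hw.of_le (by norm_num)) hrI] at heq
  rw [(hasDerivAt_effectivePotential hV μ J _).deriv]
  linear_combination heq

theorem mixed_deriv_sub_deriv_div (hI : UniqueDiffOn ℝ I) (hr₀ : r ≠ 0)
    (hw : ContDiffOn ℝ 2 (fun q : ℝ × ℝ => w q.1 q.2) (I ×ˢ univ)) (hr : r ∈ interior I) (t : ℝ) :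
    deriv (fun s => deriv (fun σ => σ * w σ s) r) t - 1 / r * deriv (fun s => r * w r s) t =
      r * deriv (fun s => deriv (fun σ => w σ s) r) t := by
  have hrI := interior_subset hr
  have hvrt : deriv (fun s => deriv (fun σ => σ * w σ s) r) t = _ :=
    deriv_time_deriv_radial hI (contDiffOn_radialReduction hw) hr t
  have hwrt : deriv (fun s => deriv (fun σ => w σ s) r) t = _ :=
    deriv_time_deriv_radial hI hw hr t
  rw [hvrt, hwrt, deriv_time_mul_profile (hw.of_le one_le_two) hrI,
    timeDeriv_radialDeriv_radialReduction hI hw hrI,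
    timeDeriv_radialReduction (hw.of_le one_le_two) hrI]
  field_simp
  ring

theorem radialEnergyFlux_eq (hI : UniqueDiffOn ℝ I)
    (hw : ContDiffOn ℝ 2 (fun q : ℝ × ℝ => w q.1 q.2) (I ×ˢ univ)) (hr : r ∈ I) (β t : ℝ) :
    radialEnergyFlux I β (fun q => w q.1 q.2) (r, t) =
      deriv (fun s => r * w r s) t * (derivWithin (fun σ => σ * w σ t) I r +
        β * (r * deriv (fun s => derivWithin (fun σ => w σ s) I r) t)) := by
  have hw₁ := hw.of_le one_le_two
  have hvr : derivWithin (fun σ => σ * w σ t) I r = _ := (hasDerivWithinAt_radial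
    ((contDiffOn_radialReduction hw₁).differentiableOn one_ne_zero) hr t).derivWithin (hI r hr)
  have hwrt : deriv (fun s => derivWithin (fun σ => w σ s) I r) t = _ :=
    deriv_time_derivWithin_radial hI hw hr t
  rw [hvr, hwrt, deriv_time_mul_profile hw₁ hr, radialEnergyFlux]

end ClassicalDerivatives

theorem radial_energy_rate_general
    (L μ J β γ t : ℝ) (hL : 0 < L) (V : ℝ → ℝ) (hV : ContDiff ℝ 1 V) (w : ℝ → ℝ → ℝ)
    (hw : ContDiffOn ℝ 3 (fun q : ℝ × ℝ => w q.1 q.2) (Icc 0 L ×ˢ univ))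
    (heq : ∀ r ∈ Ioo 0 L,
      deriv (fun s => deriv (fun τ => r * w r τ) s) t
        - deriv (fun σ => deriv (fun σ' => σ' * w σ' t) σ) r
        + μ * (r * w r t) + r * deriv V (w r t) - J * r
      = β * deriv (fun s => deriv (fun σ => deriv (fun σ' => σ' * w σ' s) σ) r) t
        - γ * deriv (fun s => r * w r s) t) :
    HasDerivAt
      (fun s => Real.pi / 2 * ∫ r in (0 : ℝ)..L,
        (1 / 2 * deriv (fun τ => r * w r τ) s ^ 2 + 1 / 2 * deriv (fun σ => σ * w σ s) r ^ 2
          + r ^ 2 * (μ / 2 * w r s ^ 2 + V (w r s) - J * w r s)))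
      (Real.pi / 2 * (deriv (fun s => L * w L s) t *
          (derivWithin (fun σ => σ * w σ t) (Icc 0 L) L
            + β * (L * deriv (fun s => derivWithin (fun σ => w σ s) (Icc 0 L) L) t)))
        - Real.pi / 2 * ∫ r in (0 : ℝ)..L,
          (β * (deriv (fun s => deriv (fun σ => σ * w σ s) r) t
              - 1 / r * deriv (fun s => r * w r s) t) ^ 2
            + γ * deriv (fun s => r * w r s) t ^ 2)) t := by
  have hw₁ : ContDiffOn ℝ 1 (fun q : ℝ × ℝ => w q.1 q.2) (Icc 0 L ×ˢ univ) :=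
    hw.of_le (by norm_num)
  have hw₂ : ContDiffOn ℝ 2 (fun q : ℝ × ℝ => w q.1 q.2) (Icc 0 L ×ˢ univ) :=
    hw.of_le (by norm_num)
  have hI := uniqueDiffOn_Icc hL
  have hint {r} (hr : r ∈ Ioo 0 L) : r ∈ interior (Icc 0 L) := by rwa [interior_Icc]
  have hbalance := hasDerivAt_radial_energy hL (contDiff_effectivePotential hV μ J) hw fun r hr =>
    radialReduction_wave_equation hI (hV.differentiable one_ne_zero) hw (hint hr) (heq r hr)
  have hcenter : radialEnergyFlux (Icc 0 L) β (fun q => w q.1 q.2) (0, t) = 0 := by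
    rw [radialEnergyFlux, timeDeriv_radialReduction hw₁ (left_mem_Icc.2 hL.le), zero_mul, zero_mul]
  rw [hcenter, sub_zero, radialEnergyFlux_eq hI hw₂ (right_mem_Icc.2 hL.le)] at hbalance
  rw [← mul_sub]
  refine ((hbalance.const_mul (Real.pi / 2)).congr_of_eventuallyEq
    (.of_forall fun s => congrArg (Real.pi / 2 * ·) ?energy)).congr_deriv
    (congrArg (Real.pi / 2 * ·) (congrArg₂ (· - ·) rfl ?dissipation))
  case energy =>
    refine intervalIntegral.integral_congr_Ioo_of_le hL.le fun r hr => ?_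
    simp only [deriv_time_mul_profile hw₁ (Ioo_subset_Icc_self hr),
      deriv_radial_mul_profile hw₁ (hint hr), effectivePotential]
  case dissipation =>
    refine intervalIntegral.integral_congr_Ioo_of_le hL.le fun r hr => ?_
    have hwrt : deriv (fun s => deriv (fun σ => w σ s) r) t = _ :=
      deriv_time_deriv_radial hI hw₂ (hint hr) t
    rw [mixed_deriv_sub_deriv_div hI hr.1.ne' hw₂ (hint hr), hwrt,
      deriv_time_mul_profile hw₁ (Ioo_subset_Icc_self hr)]

/-- Rate of change of the radial energy
`E(t) = (π/2)∫₀ᴸ[½v_t² + ½v_r² + r²G(v/r)]dr` for the radially reduced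
dissipative nonlinear wave equation, with `v(r,t) = r·w(r,t)` and boundary
conditions `w(L,t) = 0`, `∂w/∂r(L,t) = 0`. -/
theorem radial_energy_rate
    (L μ J β γ : ℝ) (hL : 0 < L) (hβ : 0 ≤ β) (hγ : 0 ≤ γ)
    (V : ℝ → ℝ) (hV : ContDiff ℝ 1 V)
    (w : ℝ → ℝ → ℝ)
    (hw : ContDiffOn ℝ 3 (fun q : ℝ × ℝ => w q.1 q.2) (Set.Icc 0 L ×ˢ Set.univ))
    (heq : ∀ r ∈ Set.Ioo (0:ℝ) L, ∀ t : ℝ,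
      deriv (fun s => deriv (fun τ => r * w r τ) s) t
        - deriv (fun σ => deriv (fun σ' => σ' * w σ' t) σ) r
        + μ * (r * w r t)
        + r * deriv V (w r t)
        - J * r
      = β * deriv (fun s => deriv (fun σ => deriv (fun σ' => σ' * w σ' s) σ) r) t
        - γ * deriv (fun s => r * w r s) t)
    (hbc : ∀ t : ℝ, w L t = 0 ∧ deriv (fun σ => w σ t) L = 0) :
    ∀ t : ℝ,
      HasDerivAt
        (fun s => Real.pi / 2 * ∫ r in (0:ℝ)..L,
          ((1:ℝ)/2 * (deriv (fun τ => r * w r τ) s) ^ 2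
            + (1:ℝ)/2 * (deriv (fun σ => σ * w σ s) r) ^ 2
            + r ^ 2 * (μ / 2 * (w r s) ^ 2 + V (w r s) - J * w r s)))
        (-(Real.pi / 2) * ∫ r in (0:ℝ)..L,
          (β * (deriv (fun s => deriv (fun σ => σ * w σ s) r) t
                - 1 / r * deriv (fun s => r * w r s) t) ^ 2
            + γ * (deriv (fun s => r * w r s) t) ^ 2)) t
      ∧ ∀ r ∈ Set.Ioo (0:ℝ) L,
          deriv (fun s => deriv (fun σ => σ * w σ s) r) t
              - 1 / r * deriv (fun s => r * w r s) t
            = r * deriv (fun s => deriv (fun σ => w σ s) r) t := by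
  intro t
  have hbalance := radial_energy_rate_general L μ J β γ t hL V hV w hw fun r hr => heq r hr t
  exact ⟨hbalance.congr_deriv (by simp [(hbc _).1]), fun r hr => mixed_deriv_sub_deriv_div
    (uniqueDiffOn_Icc hL) hr.1.ne' (hw.of_le (by norm_num)) (by rwa [interior_Icc]) t⟩
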